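/- Let d = (d_1, …, d_n) be a graphical degree sequence with d_min ≥ 1 and 3 ≤ d_max ≤ (1/3)·√M, and let Z ∈ Ω(d). Then |L*(Z)| ≤ 2·M^6·|Ω(d)|, where L*(Z) is the set of good encodings consistent with Z. -/

import Mathlib

/-!
The encodings in `Lstar d Z` are compared with `Omega d` by switchings: alternating closed walks
along which labels are changed by `+1` and `-1` in turn, preserving symmetry and row sums.
Write `C(p, q)` (`Cls`) for the consistent encodings with `p` edges labelled `2` and `q` edges
labelled `-1` satisfying a mild local condition, so that `C(0, 0)` embeds in `Omega d`
(`cls_zero_le`). Let `D = dmax d`; the hypotheses give `D ≥ 3` and `9 D² ≤ M`, hence `M ≥ 81`.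

* A `(-1)`-edge `x y` is removed by a switching along a closed walk `x y w p q z`. There are at
  least two choices for each of `z` and `w`, and all but `O(D²)` of the ordered `1`-labelled edges
  `p q` are admissible (`good_card`). Since `x y` is an edge of `Z` by consistency, a given result
  arises from at most about `M³` switchings. Hence `2 |C(p, q + 1)| ≤ M² |C(p, q)|` (`cls_neg_le`).
* A `2`-edge `x y` is removed by a switching along `x y p q`; the result contains a `1`-labelled
  path `p y x q`, giving at most `M D² ≤ M²/9` preimages, so `2 |C(p + 1, 0)| ≤ M |C(p, 0)|`
  (`cls_two_le`).
* These two steps would cost a power `M⁷` for one `2`-edge and three `(-1)`-edges. In a good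
  encoding of this kind a `2`-edge `x z` and a `(-1)`-edge `x y` share a vertex, and both are removed
  by a single switching along `x y w p q z`; as `z` and `q` are found by walking along `1`-labelled
  edges from `x`, there are at most about `M² D²` preimages, and the cost is `2 M²` (`cls_joint_le`).

The five permitted configurations leave only the classes with `p, q ≤ 2`, the class `C(0, 3)`, and
the part of `C(1, 3)` with adjacent defects of different labels (`Lstar_classify`). Multiplying the
ratios and summing over these eleven classes gives less than `2 M⁶ |Ω(d)|`.
-/

open scoped Classical

noncomputable section

namespace SwitchChain

variable {n : ℕ}

/-- `Omega d` is the set of simple graphs on `[n] = Fin n` with degree sequence `d`. -/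
def Omega (d : Fin n → ℕ) : Set (SimpleGraph (Fin n)) :=
  {G | ∀ v, {w | G.Adj v w}.ncard = d v}

/-- `M d` is the sum of the degrees. -/
def M (d : Fin n → ℕ) : ℕ := ∑ j, d j

/-- The maximum degree. -/
def dmax (d : Fin n → ℕ) : ℕ := Finset.univ.sup d

/-- An encoding for the degree sequence `d`: a symmetric integer matrix with zero
diagonal, entries in `{-1, 0, 1, 2}`, and row sums `d`. -/
def IsEncoding (d : Fin n → ℕ) (L : Matrix (Fin n) (Fin n) ℤ) : Prop :=
  (∀ i j, L i j = L j i) ∧ (∀ i, L i i = 0) ∧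
  (∀ i j, L i j = -1 ∨ L i j = 0 ∨ L i j = 1 ∨ L i j = 2) ∧
  (∀ i, ∑ j, L i j = (d i : ℤ))

/-- The set of (unordered) edges of `L` carrying the label `c`. -/
def labelEdges (L : Matrix (Fin n) (Fin n) ℤ) (c : ℤ) : Set (Sym2 (Fin n)) :=
  {e | ∃ x y : Fin n, e = s(x, y) ∧ x ≠ y ∧ L x y = c}

/-- Every defect edge of `L` occurs, with its label, in the labelled edge set `D`. -/
def DefectsWithin (L : Matrix (Fin n) (Fin n) ℤ) (D : Set (Sym2 (Fin n) × ℤ)) : Prop :=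
  ∀ x y : Fin n, x ≠ y → (L x y = 2 ∨ L x y = -1) → (s(x, y), L x y) ∈ D

/-- A valid encoding: at most four defect edges, forming a labelled subgraph of one
of the five possible configurations. -/
def ValidEncoding (d : Fin n → ℕ) (L : Matrix (Fin n) (Fin n) ℤ) : Prop :=
  IsEncoding d L ∧
  (labelEdges L 2).ncard + (labelEdges L (-1)).ncard ≤ 4 ∧
  ∃ (a b c u e f : Fin n) (ℓ : ℤ), (ℓ = -1 ∨ ℓ = 2) ∧
    (([a, b, c, u].Pairwise (· ≠ ·) ∧ e ≠ f ∧
        e ∉ ({a, b, c, u} : Set (Fin n)) ∧ f ∉ ({a, b, c, u} : Set (Fin n)) ∧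
        DefectsWithin L {(s(a, b), 2), (s(b, c), -1), (s(b, u), -1), (s(e, f), ℓ)}) ∨
     ([a, b, c, u, e].Pairwise (· ≠ ·) ∧
        DefectsWithin L {(s(a, b), 2), (s(b, c), -1), (s(b, u), -1), (s(u, e), ℓ)}) ∨
     ([a, b, c, u, e].Pairwise (· ≠ ·) ∧
        DefectsWithin L {(s(a, b), -1), (s(b, c), -1), (s(b, u), 2), (s(u, e), ℓ)}) ∨
     ([a, b, c, u].Pairwise (· ≠ ·) ∧
        DefectsWithin L {(s(a, b), -1), (s(b, c), -1), (s(b, u), 2), (s(u, c), ℓ)}) ∨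
     ([a, b, c, u].Pairwise (· ≠ ·) ∧
        DefectsWithin L {(s(a, b), 2), (s(b, c), -1), (s(b, u), -1), (s(u, c), ℓ)}))

/-- A good encoding: a valid encoding satisfying the degree conditions of
Lemma 2.3. -/
def GoodEncoding (d : Fin n → ℕ) (L : Matrix (Fin n) (Fin n) ℤ) : Prop :=
  ValidEncoding d L ∧
  (∀ x y : Fin n, x ≠ y → L x y = 2 → 2 ≤ d x ∧ 2 ≤ d y) ∧
  (∀ x y z : Fin n, x ≠ y → y ≠ z → x ≠ z → L x y = 2 → L y z = 2 → 4 ≤ d y) ∧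
  (∀ x y z : Fin n, x ≠ y → y ≠ z → x ≠ z → L x y = 2 → L y z = -1 → 3 ≤ d y)

/-- The 0-1 adjacency matrix of a simple graph, over `ℤ`. -/
def adjMat (Z : SimpleGraph (Fin n)) : Matrix (Fin n) (Fin n) ℤ :=
  fun i j => if Z.Adj i j then 1 else 0

/-- `L` is consistent with `Z` if every entry of `L + Z` lies in `{0, 1, 2}`. -/
def ConsistentWith (L : Matrix (Fin n) (Fin n) ℤ) (Z : SimpleGraph (Fin n)) : Prop :=
  ∀ i j, L i j + adjMat Z i j = 0 ∨ L i j + adjMat Z i j = 1 ∨ L i j + adjMat Z i j = 2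

/-- `L*(Z)`: the set of good encodings consistent with `Z`. -/
def Lstar (d : Fin n → ℕ) (Z : SimpleGraph (Fin n)) : Set (Matrix (Fin n) (Fin n) ℤ) :=
  {L | GoodEncoding d L ∧ ConsistentWith L Z}

/-! ### Counting labels -/

/-- The ordered pairs carrying the label `c`; each edge labelled `c` is counted twice. -/
def pairs (L : Matrix (Fin n) (Fin n) ℤ) (c : ℤ) : Finset (Fin n × Fin n) :=
  Finset.univ.filter fun e => L e.1 e.2 = c

/-- The neighbours of `i` along edges labelled `c`. -/
def row (L : Matrix (Fin n) (Fin n) ℤ) (c : ℤ) (i : Fin n) : Finset (Fin n) :=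
  Finset.univ.filter fun j => L i j = c

/-- The local condition which guarantees, when all degrees are positive, that both ends of a
`(-1)`-defect edge have at least two neighbours along edges labelled `1`. It is inherited when defects are removed. -/
def DefectLocal (d : Fin n → ℕ) (L : Matrix (Fin n) (Fin n) ℤ) : Prop :=
  ∀ x x' y z, L y x = 2 → L y x' = 2 → L y z = -1 → x = x' ∧ 3 ≤ d y

/-- Encodings consistent with `Z` with exactly `p` edges labelled `2` and `q` edges labelled `-1`,
subject to `DefectLocal`. -/
structure IsCls (d : Fin n → ℕ) (Z : SimpleGraph (Fin n)) (p q : ℕ)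
    (L : Matrix (Fin n) (Fin n) ℤ) : Prop where
  enc : IsEncoding d L
  cons : ConsistentWith L Z
  loc : DefectLocal d L
  two : (pairs L 2).card = 2 * p
  neg : (pairs L (-1)).card = 2 * q

/-- The finite set of matrices satisfying `IsCls`. -/
def Cls (d : Fin n → ℕ) (Z : SimpleGraph (Fin n)) (p q : ℕ) :
    Finset (Matrix (Fin n) (Fin n) ℤ) :=
  (Fintype.piFinset fun _ => Fintype.piFinset fun _ => ({-1, 0, 1, 2} : Finset ℤ)).filter
    (IsCls d Z p q)

lemma mem_Cls {d : Fin n → ℕ} {Z : SimpleGraph (Fin n)} {p q : ℕ}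
    {L : Matrix (Fin n) (Fin n) ℤ} : L ∈ Cls d Z p q ↔ IsCls d Z p q L := by
  refine Finset.mem_filter.trans (and_iff_right_iff_imp.2 fun h => ?_)
  refine Fintype.mem_piFinset.2 fun i => Fintype.mem_piFinset.2 fun j => ?_
  simpa using h.enc.2.2.1 i j

lemma row_le_dmax (d : Fin n → ℕ) (i : Fin n) : d i ≤ dmax d :=
  Finset.le_sup (f := d) (Finset.mem_univ i)

/-- The row-sum condition in terms of the number of entries with each label. -/
lemma row_sum {d : Fin n → ℕ} {L : Matrix (Fin n) (Fin n) ℤ} (h : IsEncoding d L) (i : Fin n) :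
    (row L 1 i).card + 2 * (row L 2 i).card = d i + (row L (-1) i).card := by
  have h1 := h.2.2.2 i
  have h2 : ∀ j, L i j = (if L i j = 1 then 1 else 0) + 2 * (if L i j = 2 then 1 else 0)
      - (if L i j = -1 then 1 else 0) := by
    intro j
    rcases h.2.2.1 i j with h | h | h | h <;> simp [h]
  rw [Finset.sum_congr rfl fun j _ => h2 j] at h1
  simp only [Finset.sum_sub_distrib, Finset.sum_add_distrib, ← Finset.mul_sum,
    Finset.sum_boole] at h1
  simp only [row]
  zify
  linarith

lemma card_pairs (L : Matrix (Fin n) (Fin n) ℤ) (c : ℤ) :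
    (pairs L c).card = ∑ i, (row L c i).card := by
  simp only [pairs, row, Finset.card_filter]
  rw [Fintype.sum_prod_type]

lemma ones_card {d : Fin n → ℕ} {Z : SimpleGraph (Fin n)} {p q : ℕ}
    {L : Matrix (Fin n) (Fin n) ℤ} (h : IsCls d Z p q L) :
    (pairs L 1).card + 4 * p = M d + 2 * q := by
  have h1 : ∑ i, ((row L 1 i).card + 2 * (row L 2 i).card) =
      ∑ i, (d i + (row L (-1) i).card) := Finset.sum_congr rfl fun i _ => row_sum h.enc i
  simp only [Finset.sum_add_distrib, ← Finset.mul_sum, ← card_pairs] at h1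
  rw [h.two, h.neg] at h1
  simp only [M]
  omega

/-- Each `(-1)`-edge at `i` contributes the two ordered pairs `(i, j)` and `(j, i)`. -/
lemma row_neg_le {d : Fin n → ℕ} {Z : SimpleGraph (Fin n)} {p q : ℕ}
    {L : Matrix (Fin n) (Fin n) ℤ} (h : IsCls d Z p q L) (i : Fin n) :
    (row L (-1) i).card ≤ q := by
  have h1 : ((row L (-1) i).image fun j => (i, j)) ∪ ((row L (-1) i).image fun j => (j, i)) ⊆
      pairs L (-1) := by
    intro e he
    simp only [Finset.mem_union, Finset.mem_image, row, pairs, Finset.mem_filter,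
      Finset.mem_univ, true_and] at he ⊢
    rcases he with ⟨j, hj, rfl⟩ | ⟨j, hj, rfl⟩
    · exact hj
    · simpa [h.enc.1 j i] using hj
  have h2 := Finset.card_le_card h1
  rw [Finset.card_union_of_disjoint,
    Finset.card_image_of_injective _ (fun a b hab => by simpa using hab),
    Finset.card_image_of_injective _ (fun a b hab => by simpa using hab), h.neg] at h2
  · omega
  · rw [Finset.disjoint_left]
    intro e he he'
    simp only [Finset.mem_image, row, Finset.mem_filter, Finset.mem_univ, true_and] at he he'
    obtain ⟨j, hj, rfl⟩ := he
    obtain ⟨k, hk, hjk⟩ := he'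
    simp only [Prod.mk.injEq] at hjk
    obtain ⟨rfl, rfl⟩ := hjk
    rw [h.enc.2.1] at hj
    norm_num at hj

lemma row_one_le {d : Fin n → ℕ} {Z : SimpleGraph (Fin n)} {p q : ℕ}
    {L : Matrix (Fin n) (Fin n) ℤ} (h : IsCls d Z p q L) (i : Fin n) :
    (row L 1 i).card ≤ dmax d + q := by
  have := row_sum h.enc i
  have := row_neg_le h i
  have := row_le_dmax d i
  omega

/-- Each end of a `(-1)`-defect edge has at least two neighbours along edges labelled `1`. -/
lemma two_le_row_one {d : Fin n → ℕ} (hd : ∀ v, 1 ≤ d v) {Z : SimpleGraph (Fin n)} {p q : ℕ}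
    {L : Matrix (Fin n) (Fin n) ℤ} (h : IsCls d Z p q L) {x y : Fin n} (hxy : L x y = -1) :
    2 ≤ (row L 1 x).card := by
  have h1 := row_sum h.enc x
  have h2 : 1 ≤ (row L (-1) x).card := Finset.card_pos.2 ⟨y, by simp [row, hxy]⟩
  have h3 : (row L 2 x).card ≤ 1 := by
    rw [Finset.card_le_one]
    intro a ha b hb
    simp only [row, Finset.mem_filter, Finset.mem_univ, true_and] at ha hb
    exact (h.loc a b x y ha hb hxy).1
  have h4 := hd x
  rcases Finset.eq_empty_or_nonempty (row L 2 x) with h5 | ⟨a, ha⟩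
  · rw [h5] at h1
    simp at h1
    omega
  · simp only [row, Finset.mem_filter, Finset.mem_univ, true_and] at ha
    have := (h.loc a a x y ha ha hxy).2
    omega

/-- The ordered `1`-labelled edges `(p, q)` which can be used to close up an alternating walk
from `u` to `v`: both `u p` and `q v` are distinct pairs labelled `0`. -/
def good (L : Matrix (Fin n) (Fin n) ℤ) (u v : Fin n) : Finset (Fin n × Fin n) :=
  Finset.univ.filter fun e => L e.1 e.2 = 1 ∧ u ≠ e.1 ∧ L u e.1 = 0 ∧ e.2 ≠ v ∧ L e.2 v = 0

/-- Ordered `1`-labelled edges starting in the closed neighbourhood of `u`. -/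
lemma bad_card {d : Fin n → ℕ} {Z : SimpleGraph (Fin n)} {p q : ℕ}
    {L : Matrix (Fin n) (Fin n) ℤ} (h : IsCls d Z p q L) (u : Fin n) :
    ((pairs L 1).filter fun e => e.1 = u ∨ L u e.1 ≠ 0).card ≤
      (1 + dmax d + 2 * q) * dmax d + 2 * q := by
  set S : Finset (Fin n) := Finset.univ.filter fun j => j = u ∨ L u j ≠ 0 with hS
  have h0 : S.card ≤ 1 + dmax d + 2 * q := by
    have hsub : S ⊆ {u} ∪ (row L 1 u ∪ (row L 2 u ∪ row L (-1) u)) := by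
      intro j hj
      simp only [hS, row, Finset.mem_filter, Finset.mem_univ, true_and, Finset.mem_union,
        Finset.mem_singleton] at hj ⊢
      rcases h.enc.2.2.1 u j with h | h | h | h <;> simp_all
    have h1 := Finset.card_le_card hsub
    have h2 := Finset.card_union_le {u} (row L 1 u ∪ (row L 2 u ∪ row L (-1) u))
    have h3 := Finset.card_union_le (row L 1 u) (row L 2 u ∪ row L (-1) u)
    have h4 := Finset.card_union_le (row L 2 u) (row L (-1) u)
    have h5 := row_sum h.enc u
    have h6 := row_neg_le h u
    have h7 := row_le_dmax d u
    simp only [Finset.card_singleton] at h2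
    omega
  have h1 : ((pairs L 1).filter fun e => e.1 = u ∨ L u e.1 ≠ 0).card =
      ∑ i ∈ S, (row L 1 i).card := by
    rw [← Finset.card_sigma]
    refine Finset.card_bij' (fun e _ => ⟨e.1, e.2⟩) (fun e _ => (e.1, e.2)) ?_ ?_ ?_ ?_
    · intro e he
      simp_all [pairs, row]
    · intro e he
      simp_all [pairs, row]
    · intro e he; rfl
    · intro e he; rfl
  rw [h1]
  calc ∑ i ∈ S, (row L 1 i).card ≤ ∑ i ∈ S, (dmax d + (row L (-1) i).card) := by
        refine Finset.sum_le_sum fun i _ => ?_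
        have := row_sum h.enc i
        have := row_le_dmax d i
        omega
    _ = S.card * dmax d + ∑ i ∈ S, (row L (-1) i).card := by
        rw [Finset.sum_add_distrib, Finset.sum_const, smul_eq_mul]
    _ ≤ (1 + dmax d + 2 * q) * dmax d + 2 * q := by
        refine add_le_add (Nat.mul_le_mul_right _ h0) ?_
        rw [← h.neg, card_pairs]
        exact Finset.sum_le_sum_of_subset (Finset.subset_univ S)

lemma good_card {d : Fin n → ℕ} {Z : SimpleGraph (Fin n)} {p q : ℕ}
    {L : Matrix (Fin n) (Fin n) ℤ} (h : IsCls d Z p q L) (u v : Fin n) :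
    M d + 2 * q ≤ (good L u v).card + 4 * p +
      2 * ((1 + dmax d + 2 * q) * dmax d + 2 * q) := by
  have h1 := bad_card h u
  have h2 : ((pairs L 1).filter fun e => e.2 = v ∨ L v e.2 ≠ 0).card ≤
      (1 + dmax d + 2 * q) * dmax d + 2 * q := by
    refine le_trans (le_of_eq ?_) (bad_card h v)
    refine Finset.card_bij' (fun e _ => e.swap) (fun e _ => e.swap) ?_ ?_ ?_ ?_
    · intro e he
      simpa [pairs, h.enc.1 e.2 e.1] using he
    · intro e he
      simpa [pairs, h.enc.1 e.2 e.1] using he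
    · simp
    · simp
  have h3 : pairs L 1 ⊆ good L u v ∪ (((pairs L 1).filter fun e => e.1 = u ∨ L u e.1 ≠ 0) ∪
      ((pairs L 1).filter fun e => e.2 = v ∨ L v e.2 ≠ 0)) := by
    intro e he
    simp only [good, pairs, Finset.mem_filter, Finset.mem_univ, true_and, Finset.mem_union] at he ⊢
    have := h.enc.1 e.2 v
    grind
  have h4 := Finset.card_le_card h3
  have h5 := Finset.card_union_le (good L u v)
    (((pairs L 1).filter fun e => e.1 = u ∨ L u e.1 ≠ 0) ∪
      ((pairs L 1).filter fun e => e.2 = v ∨ L v e.2 ≠ 0))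
  have h6 := Finset.card_union_le ((pairs L 1).filter fun e => e.1 = u ∨ L u e.1 ≠ 0)
      ((pairs L 1).filter fun e => e.2 = v ∨ L v e.2 ≠ 0)
  have h7 := ones_card h
  omega

/-! ### Switchings -/

lemma label_congr {L : Matrix (Fin n) (Fin n) ℤ} (hs : ∀ i j, L i j = L j i) (i j a b : Fin n)
    (h : s(i, j) = s(a, b)) : L i j = L a b := by
  rw [Sym2.eq_iff] at h
  rcases h with ⟨rfl, rfl⟩ | ⟨rfl, rfl⟩
  · rfl
  · exact hs _ _

/-- The symmetric `0`-`1` matrix supported on the unordered pair `e`. -/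
def edgeMat (e : Sym2 (Fin n)) : Matrix (Fin n) (Fin n) ℤ := fun i j => if s(i, j) = e then 1 else 0

lemma edgeMat_symm (e : Sym2 (Fin n)) (i j : Fin n) : edgeMat e i j = edgeMat e j i := by
  simp only [edgeMat, Sym2.eq_swap]

lemma edgeMat_diag {a b : Fin n} (hab : a ≠ b) (i : Fin n) : edgeMat s(a, b) i i = 0 := by
  simp only [edgeMat, Sym2.eq_iff]
  grind

lemma edgeMat_row {a b : Fin n} (hab : a ≠ b) (i : Fin n) :
    ∑ j, edgeMat s(a, b) i j = (if i = a then 1 else 0) + (if i = b then 1 else 0) := by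
  have h : ∀ j, edgeMat s(a, b) i j =
      (if j = b then (if i = a then 1 else 0) else 0) +
        (if j = a then (if i = b then 1 else 0) else 0) := by
    intro j
    simp only [edgeMat, Sym2.eq_iff]
    grind
  simp only [h, Finset.sum_add_distrib, Finset.sum_ite_eq', Finset.mem_univ, if_true]

/-- The change of labels along the closed walk `x y w p q z`, starting with `+1` on `x y`. -/
def sw6 (x y z w p q : Fin n) : Matrix (Fin n) (Fin n) ℤ :=
  fun i j => edgeMat s(x, y) i j - edgeMat s(y, w) i j + edgeMat s(w, p) i j
    - edgeMat s(p, q) i j + edgeMat s(q, z) i j - edgeMat s(x, z) i j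

/-- The change of labels along the closed walk `x y p q`, starting with `-1` on `x y`. -/
def sw4 (x y p q : Fin n) : Matrix (Fin n) (Fin n) ℤ :=
  fun i j => - edgeMat s(x, y) i j + edgeMat s(y, p) i j
    - edgeMat s(p, q) i j + edgeMat s(q, x) i j

/-- `L'` is symmetric with zero diagonal and row sums `d`, and arises from `L` by a label change
which leaves no defect on the pairs in `P`
and no new defect elsewhere, and which alters no defect outside `P`. -/
structure Reduces (d : Fin n → ℕ) (P : Set (Sym2 (Fin n)))
    (L L' : Matrix (Fin n) (Fin n) ℤ) : Prop where
  symm : ∀ i j, L' i j = L' j i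
  diag : ∀ i, L' i i = 0
  sum : ∀ i, ∑ j, L' i j = (d i : ℤ)
  outside : ∀ i j, s(i, j) ∉ P → L' i j = L i j ∨
    (L' i j = 0 ∨ L' i j = 1) ∧ (L i j = 0 ∨ L i j = 1)
  inside : ∀ i j, s(i, j) ∈ P → L' i j = 0 ∨ L' i j = 1

lemma Reduces.two_iff {d : Fin n → ℕ} {P : Set (Sym2 (Fin n))}
    {L L' : Matrix (Fin n) (Fin n) ℤ} (h : Reduces d P L L') (i j : Fin n) :
    L' i j = 2 ↔ L i j = 2 ∧ s(i, j) ∉ P := by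
  have h1 := h.outside i j
  have h2 := h.inside i j
  by_cases hP : s(i, j) ∈ P
  · rcases h2 hP with h | h <;> simp [hP, h]
  · rcases h1 hP with h | ⟨h | h, h' | h'⟩
    · simp [hP, h]
    all_goals simp [h, h']

lemma Reduces.neg_iff {d : Fin n → ℕ} {P : Set (Sym2 (Fin n))}
    {L L' : Matrix (Fin n) (Fin n) ℤ} (h : Reduces d P L L') (i j : Fin n) :
    L' i j = -1 ↔ L i j = -1 ∧ s(i, j) ∉ P := by
  have h1 := h.outside i j
  have h2 := h.inside i j
  by_cases hP : s(i, j) ∈ P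
  · rcases h2 hP with h | h <;> simp [hP, h]
  · rcases h1 hP with h | ⟨h | h, h' | h'⟩
    · simp [hP, h]
    all_goals simp [h, h']

lemma Reduces.isCls {d : Fin n → ℕ} {Z : SimpleGraph (Fin n)} {p q p' q' : ℕ}
    {P : Set (Sym2 (Fin n))} {L L' : Matrix (Fin n) (Fin n) ℤ} (h : Reduces d P L L')
    (hL : IsCls d Z p q L) (hp : (pairs L' 2).card = 2 * p') (hq : (pairs L' (-1)).card = 2 * q') :
    IsCls d Z p' q' L' where
  enc := by
    refine ⟨h.symm, h.diag, fun i j => ?_, h.sum⟩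
    by_cases hP : s(i, j) ∈ P
    · have := h.inside i j hP
      tauto
    · have h1 := h.outside i j hP
      have h2 := hL.enc.2.2.1 i j
      rcases h1 with h1 | h1
      · rwa [h1]
      · tauto
  cons := by
    intro i j
    have h3 : L' i j = 0 ∨ L' i j = 1 →
        L' i j + adjMat Z i j = 0 ∨ L' i j + adjMat Z i j = 1 ∨ L' i j + adjMat Z i j = 2 := by
      simp only [adjMat]
      split_ifs <;> omega
    by_cases hP : s(i, j) ∈ P
    · exact h3 (h.inside i j hP)
    · rcases h.outside i j hP with h1 | h1
      · rw [h1]; exact hL.cons i j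
      · exact h3 h1.1
  loc := by
    intro x x' y z h1 h2 h3
    rw [h.two_iff] at h1 h2
    rw [h.neg_iff] at h3
    exact hL.loc x x' y z h1.1 h2.1 h3.1
  two := hp
  neg := hq

/-- Removing one edge from the `c`-labelled edges removes two ordered pairs. -/
lemma card_remove {L L' : Matrix (Fin n) (Fin n) ℤ} {c : ℤ} {x y : Fin n} (hxy : x ≠ y)
    (hs : ∀ i j, L i j = L j i) (hc : L x y = c) {k : ℕ}
    (hcard : (pairs L c).card = 2 * (k + 1))
    (h : ∀ i j, L' i j = c ↔ L i j = c ∧ s(i, j) ≠ s(x, y)) :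
    (pairs L' c).card = 2 * k := by
  have h1 : pairs L' c = pairs L c \ {(x, y), (y, x)} := by
    ext ⟨i, j⟩
    simp only [pairs, Finset.mem_filter, Finset.mem_univ, true_and, Finset.mem_sdiff, h i j,
      Finset.mem_insert, Finset.mem_singleton, Prod.mk.injEq, ne_eq, Sym2.eq_iff]
  have h2 : ({(x, y), (y, x)} : Finset (Fin n × Fin n)) ⊆ pairs L c := by
    intro e he
    simp only [Finset.mem_insert, Finset.mem_singleton] at he
    rcases he with rfl | rfl
    · simpa [pairs] using hc
    · simpa [pairs, hs y x] using hc
  have h3 : ({(x, y), (y, x)} : Finset (Fin n × Fin n)).card = 2 := by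
    rw [Finset.card_pair]
    simp only [ne_eq, Prod.mk.injEq, not_and]
    exact fun h => absurd h hxy
  rw [h1, Finset.card_sdiff_of_subset h2, h3]
  omega

/-- The entries of the result of a six-edge switching. The walk may visit a vertex twice, but the
hypotheses on the labels already force its six edges to be distinct. -/
lemma sw6_spec {d : Fin n → ℕ} {L : Matrix (Fin n) (Fin n) ℤ} (hL : IsEncoding d L)
    {x y z w p q : Fin n} (hxy : L x y = -1) (hxz : L x z = 1 ∨ L x z = 2) (hyw : L y w = 1)
    (hg : (p, q) ∈ good L w z) :
    Reduces d {s(x, y), s(x, z)} L (L + sw6 x y z w p q) ∧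
      (L + sw6 x y z w p q) x y = 0 ∧ (L + sw6 x y z w p q) x z = L x z - 1 ∧
      (L + sw6 x y z w p q) w p = 1 ∧ (L + sw6 x y z w p q) q z = 1 := by
  simp only [good, Finset.mem_filter, Finset.mem_univ, true_and] at hg
  obtain ⟨hpq, hwp, hwp0, hqz, hqz0⟩ := hg
  have hs := hL.1
  have key := label_congr hs
  have nd : ∀ i j, L i j ≠ 0 → i ≠ j := by
    rintro i j h rfl
    exact h (hL.2.1 i)
  have dxy : x ≠ y := nd x y (by omega)
  have dxz : x ≠ z := nd x z (by omega)
  have dyw : y ≠ w := nd y w (by omega)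
  have dpq : p ≠ q := nd p q (by omega)
  have e12 : s(x, y) ≠ s(y, w) := fun h => by have := key _ _ _ _ h; omega
  have e13 : s(x, y) ≠ s(w, p) := fun h => by have := key _ _ _ _ h; omega
  have e14 : s(x, y) ≠ s(p, q) := fun h => by have := key _ _ _ _ h; omega
  have e15 : s(x, y) ≠ s(q, z) := fun h => by have := key _ _ _ _ h; omega
  have e16 : s(x, y) ≠ s(x, z) := fun h => by have := key _ _ _ _ h; omega
  have e23 : s(y, w) ≠ s(w, p) := fun h => by have := key _ _ _ _ h; omega
  have e24 : s(y, w) ≠ s(p, q) := by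
    rw [ne_eq, Sym2.eq_iff]
    rintro (⟨rfl, rfl⟩ | ⟨rfl, rfl⟩)
    · have := hs y w; omega
    · exact hwp rfl
  have e25 : s(y, w) ≠ s(q, z) := fun h => by have := key _ _ _ _ h; omega
  have e26 : s(y, w) ≠ s(x, z) := by
    rw [ne_eq, Sym2.eq_iff]
    rintro (⟨rfl, rfl⟩ | ⟨rfl, rfl⟩)
    · exact dxy rfl
    · omega
  have e34 : s(w, p) ≠ s(p, q) := fun h => by have := key _ _ _ _ h; omega
  have e35 : s(w, p) ≠ s(q, z) := by
    rw [ne_eq, Sym2.eq_iff]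
    rintro (⟨rfl, rfl⟩ | ⟨rfl, rfl⟩)
    · have := hs w p; omega
    · exact dpq rfl
  have e36 : s(w, p) ≠ s(x, z) := fun h => by have := key _ _ _ _ h; omega
  have e45 : s(p, q) ≠ s(q, z) := fun h => by have := key _ _ _ _ h; omega
  have e46 : s(p, q) ≠ s(x, z) := by
    rw [ne_eq, Sym2.eq_iff]
    rintro (⟨rfl, rfl⟩ | ⟨rfl, rfl⟩)
    · exact hqz rfl
    · omega
  have e56 : s(q, z) ≠ s(x, z) := fun h => by have := key _ _ _ _ h; omega
  have val : ∀ i j, (L + sw6 x y z w p q) i j = L i j + ((if s(i, j) = s(x, y) then 1 else 0)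
    - (if s(i, j) = s(y, w) then 1 else 0) + (if s(i, j) = s(w, p) then 1 else 0)
    - (if s(i, j) = s(p, q) then 1 else 0) + (if s(i, j) = s(q, z) then 1 else 0)
    - (if s(i, j) = s(x, z) then 1 else 0)) := fun i j => rfl
  have h1 : (L + sw6 x y z w p q) x y = 0 := by
    rw [val, hxy]; simp only [e12, e13, e14, e15, e16, if_true, if_false]; norm_num
  have h6 : (L + sw6 x y z w p q) x z = L x z - 1 := by
    rw [val]; simp only [e16.symm, e26.symm, e36.symm, e46.symm, e56.symm, if_true, if_false]; ring
  have h3 : (L + sw6 x y z w p q) w p = 1 := by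
    rw [val, hwp0]
    simp only [e13.symm, e23.symm, e34, e35, e36, if_true, if_false]; norm_num
  have h5 : (L + sw6 x y z w p q) q z = 1 := by
    rw [val, hqz0]
    simp only [e15.symm, e25.symm, e35.symm, e45.symm, e56, if_true, if_false]; norm_num
  have h2 : (L + sw6 x y z w p q) y w = 0 := by
    rw [val, hyw]
    simp only [e12.symm, e23, e24, e25, e26, if_true, if_false]; norm_num
  have h4 : (L + sw6 x y z w p q) p q = 0 := by
    rw [val, hpq]
    simp only [e14.symm, e24.symm, e34.symm, e45, e46, if_true, if_false]; norm_num
  have hs' : ∀ i j, (L + sw6 x y z w p q) i j = (L + sw6 x y z w p q) j i := by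
    intro i j
    rw [val, val, hs i j, Sym2.eq_swap (a := i)]
  have key' := label_congr hs'
  refine ⟨⟨hs', ?_, ?_, ?_, ?_⟩, h1, h6, h3, h5⟩
  · intro i
    simp only [Matrix.add_apply, sw6, edgeMat_diag dxy, edgeMat_diag dyw, edgeMat_diag hwp,
      edgeMat_diag dpq, edgeMat_diag hqz, edgeMat_diag dxz, hL.2.1 i]
    norm_num
  · intro i
    simp only [Matrix.add_apply, sw6, Finset.sum_add_distrib, Finset.sum_sub_distrib,
      edgeMat_row dxy, edgeMat_row dyw, edgeMat_row hwp, edgeMat_row dpq, edgeMat_row hqz,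
      edgeMat_row dxz, hL.2.2.2 i]
    ring
  · intro i j hij
    simp only [Set.mem_insert_iff, Set.mem_singleton_iff, not_or] at hij
    by_cases c2 : s(i, j) = s(y, w)
    · right; rw [key _ _ _ _ c2, key' _ _ _ _ c2, h2, hyw]; simp
    by_cases c3 : s(i, j) = s(w, p)
    · right; rw [key _ _ _ _ c3, key' _ _ _ _ c3, h3, hwp0]; simp
    by_cases c4 : s(i, j) = s(p, q)
    · right; rw [key _ _ _ _ c4, key' _ _ _ _ c4, h4, hpq]; simp
    by_cases c5 : s(i, j) = s(q, z)
    · right; rw [key _ _ _ _ c5, key' _ _ _ _ c5, h5, hqz0]; simp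
    left
    rw [val]
    simp only [hij.1, hij.2, c2, c3, c4, c5, if_false]
    norm_num
  · intro i j hij
    simp only [Set.mem_insert_iff, Set.mem_singleton_iff] at hij
    rcases hij with h | h
    · left; rw [key' _ _ _ _ h, h1]
    · rw [key' _ _ _ _ h, h6]; omega

/-- The entries of the result of a four-edge switching; the four edges are automatically
distinct. -/
lemma sw4_spec {d : Fin n → ℕ} {L : Matrix (Fin n) (Fin n) ℤ} (hL : IsEncoding d L)
    {x y p q : Fin n} (hxy : L x y = 2) (hg : (p, q) ∈ good L y x) :
    Reduces d {s(x, y)} L (L + sw4 x y p q) ∧ (L + sw4 x y p q) x y = 1 ∧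
      (L + sw4 x y p q) y p = 1 ∧ (L + sw4 x y p q) q x = 1 := by
  simp only [good, Finset.mem_filter, Finset.mem_univ, true_and] at hg
  obtain ⟨hpq, hyp, hyp0, hqx, hqx0⟩ := hg
  have hs := hL.1
  have key := label_congr hs
  have nd : ∀ i j, L i j ≠ 0 → i ≠ j := by
    rintro i j h rfl
    exact h (hL.2.1 i)
  have dxy : x ≠ y := nd x y (by omega)
  have dpq : p ≠ q := nd p q (by omega)
  have e12 : s(x, y) ≠ s(y, p) := fun h => by have := key _ _ _ _ h; omega
  have e13 : s(x, y) ≠ s(p, q) := fun h => by have := key _ _ _ _ h; omega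
  have e14 : s(x, y) ≠ s(q, x) := fun h => by have := key _ _ _ _ h; omega
  have e23 : s(y, p) ≠ s(p, q) := fun h => by have := key _ _ _ _ h; omega
  have e24 : s(y, p) ≠ s(q, x) := by
    rw [ne_eq, Sym2.eq_iff]
    rintro (⟨rfl, rfl⟩ | ⟨rfl, rfl⟩)
    · have := hs y p; omega
    · exact dxy rfl
  have e34 : s(p, q) ≠ s(q, x) := fun h => by have := key _ _ _ _ h; omega
  have val : ∀ i j, (L + sw4 x y p q) i j = L i j + (- (if s(i, j) = s(x, y) then 1 else 0)
    + (if s(i, j) = s(y, p) then 1 else 0) - (if s(i, j) = s(p, q) then 1 else 0)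
    + (if s(i, j) = s(q, x) then 1 else 0)) := fun i j => rfl
  have h1 : (L + sw4 x y p q) x y = 1 := by
    rw [val, hxy]; simp only [e12, e13, e14, if_true, if_false]; norm_num
  have h2 : (L + sw4 x y p q) y p = 1 := by
    rw [val, hyp0]; simp only [e12.symm, e23, e24, if_true, if_false]; norm_num
  have h3 : (L + sw4 x y p q) p q = 0 := by
    rw [val, hpq]; simp only [e13.symm, e23.symm, e34, if_true, if_false]; norm_num
  have h4 : (L + sw4 x y p q) q x = 1 := by
    rw [val, hqx0]; simp only [e14.symm, e24.symm, e34.symm, if_true, if_false]; norm_num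
  have hs' : ∀ i j, (L + sw4 x y p q) i j = (L + sw4 x y p q) j i := by
    intro i j
    rw [val, val, hs i j, Sym2.eq_swap (a := i)]
  have key' := label_congr hs'
  refine ⟨⟨hs', ?_, ?_, ?_, ?_⟩, h1, h2, h4⟩
  · intro i
    simp only [Matrix.add_apply, sw4, edgeMat_diag dxy, edgeMat_diag hyp,
      edgeMat_diag dpq, edgeMat_diag hqx, hL.2.1 i]
    norm_num
  · intro i
    simp only [Matrix.add_apply, sw4, Finset.sum_add_distrib, Finset.sum_sub_distrib,
      Finset.sum_neg_distrib, edgeMat_row dxy, edgeMat_row hyp, edgeMat_row dpq, edgeMat_row hqx,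
      hL.2.2.2 i]
    ring
  · intro i j hij
    simp only [Set.mem_singleton_iff] at hij
    by_cases c2 : s(i, j) = s(y, p)
    · right; rw [key _ _ _ _ c2, key' _ _ _ _ c2, h2, hyp0]; simp
    by_cases c3 : s(i, j) = s(p, q)
    · right; rw [key _ _ _ _ c3, key' _ _ _ _ c3, h3, hpq]; simp
    by_cases c4 : s(i, j) = s(q, x)
    · right; rw [key _ _ _ _ c4, key' _ _ _ _ c4, h4, hqx0]; simp
    left
    rw [val]
    simp only [hij, c2, c3, c4, if_false]
    norm_num
  · intro i j hij
    simp only [Set.mem_singleton_iff] at hij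
    right; rw [key' _ _ _ _ hij, h1]

/-! ### Double counting -/

/-- If every `L ∈ X` admits at least `A` switchings into `Y`, and the switchings leading to a given
element of `Y` have at most `B` codes, then `A * |X| ≤ B * |Y|`. -/
lemma double_count {α τ κ : Type*} [AddCommGroup α] (X Y : Finset α) (F : α → Finset τ)
    (R : α → Finset κ) (δ : τ → α) (code : τ → κ) (hcode : Function.Injective code) (A B : ℕ)
    (hA : ∀ L ∈ X, A ≤ (F L).card)
    (hF : ∀ L ∈ X, ∀ t ∈ F L, L + δ t ∈ Y ∧ code t ∈ R (L + δ t))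
    (hB : ∀ L ∈ Y, (R L).card ≤ B) : A * X.card ≤ B * Y.card := by
  calc A * X.card = X.card • A := by rw [smul_eq_mul, mul_comm]
    _ ≤ ∑ L ∈ X, (F L).card := Finset.card_nsmul_le_sum _ _ _ hA
    _ = (X.sigma F).card := (Finset.card_sigma _ _).symm
    _ ≤ (Y.sigma R).card := by
        refine Finset.card_le_card_of_injOn (fun t => ⟨t.1 + δ t.2, code t.2⟩) ?_ ?_
        · rintro ⟨L, t⟩ h
          simp only [Finset.mem_coe, Finset.mem_sigma] at h ⊢
          exact hF L h.1 t h.2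
        · rintro ⟨L, t⟩ - ⟨L', t'⟩ - h
          simp only [Sigma.mk.injEq, heq_eq_eq] at h
          obtain rfl := hcode h.2
          have := add_right_cancel h.1
          rw [this]
    _ = ∑ L ∈ Y, (R L).card := Finset.card_sigma _ _
    _ ≤ Y.card • B := Finset.sum_le_card_nsmul _ _ _ hB
    _ = B * Y.card := by rw [smul_eq_mul, mul_comm]

/-- The ordered adjacent pairs of `Z`. -/
def adjPairs (Z : SimpleGraph (Fin n)) : Finset (Fin n × Fin n) :=
  Finset.univ.filter fun e => Z.Adj e.1 e.2

lemma adjPairs_card {d : Fin n → ℕ} {Z : SimpleGraph (Fin n)} (hZ : Z ∈ Omega d) :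
    (adjPairs Z).card = M d := by
  simp only [adjPairs, Finset.card_filter]
  rw [Fintype.sum_prod_type]
  refine Finset.sum_congr rfl fun i _ => ?_
  rw [← hZ i, ← Finset.card_filter, Set.ncard_eq_toFinset_card']
  congr 1
  ext j
  simp

/-- Consistency forces the `(-1)`-defect edges to be edges of `Z`. -/
lemma adj_of_neg {L : Matrix (Fin n) (Fin n) ℤ} {Z : SimpleGraph (Fin n)}
    (h : ConsistentWith L Z) {x y : Fin n} (hxy : L x y = -1) : Z.Adj x y := by
  have := h x y
  rw [hxy] at this
  by_contra hn
  simp [adjMat, hn] at this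

/-- The six-edge switchings along `x y w p q z` in which `x y` has label `-1` and `x z` has
label `c`, recorded as `((x, y), (z, w), (p, q))`. -/
def moves6 (c : ℤ) (L : Matrix (Fin n) (Fin n) ℤ) :
    Finset (Σ _ : Fin n × Fin n, Σ _ : Fin n × Fin n, Fin n × Fin n) :=
  (pairs L (-1)).sigma fun e => (row L c e.1 ×ˢ row L 1 e.2).sigma fun f => good L f.2 f.1

/-- The double count behind the removal of a `(-1)`-defect by a six-edge switching. A switching is
recovered from its result by an edge `x y` of `Z` and two ordered `1`-labelled edges. -/
lemma count_neg {d : Fin n → ℕ} (hd : ∀ v, 1 ≤ d v) {Z : SimpleGraph (Fin n)} (hZ : Z ∈ Omega d)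
    {p q G N : ℕ}
    (hG : G + 4 * p + 2 * ((1 + dmax d + 2 * (q + 1)) * dmax d + 2 * (q + 1)) ≤ M d + 2 * (q + 1))
    (hN : M d + 2 * q ≤ N) :
    8 * (q + 1) * G * (Cls d Z p (q + 1)).card ≤ M d * N ^ 2 * (Cls d Z p q).card := by
  refine double_count _ _ (moves6 1)
    (fun L => adjPairs Z ×ˢ (pairs L 1 ×ˢ pairs L 1))
    (fun t => sw6 t.1.1 t.1.2 t.2.1.1 t.2.1.2 t.2.2.1 t.2.2.2)
    (fun t => (t.1, (t.2.1.2, t.2.2.1), (t.2.2.2, t.2.1.1))) ?_ _ _ ?_ ?_ ?_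
  · rintro ⟨⟨x, y⟩, ⟨z, w⟩, ⟨p, q⟩⟩ ⟨⟨x', y'⟩, ⟨z', w'⟩, ⟨p', q'⟩⟩ h
    simp only [Prod.mk.injEq] at h
    obtain ⟨⟨rfl, rfl⟩, ⟨rfl, rfl⟩, rfl, rfl⟩ := h
    rfl
  · intro L hL
    rw [mem_Cls] at hL
    rw [moves6, Finset.card_sigma]
    have h1 : ∀ e ∈ pairs L (-1), 4 * G ≤
        ((row L 1 e.1 ×ˢ row L 1 e.2).sigma fun f => good L f.2 f.1).card := by
      intro e he
      simp only [pairs, Finset.mem_filter, Finset.mem_univ, true_and] at he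
      have h2 := two_le_row_one hd hL he
      rw [hL.enc.1] at he
      have h3 := two_le_row_one hd hL he
      rw [Finset.card_sigma]
      have h4 := Finset.card_nsmul_le_sum (row L 1 e.1 ×ˢ row L 1 e.2)
        (fun f => (good L f.2 f.1).card) G (fun f _ => by
          have := good_card hL f.2 f.1
          omega)
      rw [Finset.card_product, smul_eq_mul] at h4
      refine le_trans (Nat.mul_le_mul_right _ ?_) h4
      exact Nat.mul_le_mul h2 h3
    have h5 := Finset.card_nsmul_le_sum _ _ _ h1
    rw [hL.neg, smul_eq_mul] at h5
    refine le_trans (le_of_eq ?_) h5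
    ring
  · rintro L hL ⟨⟨x, y⟩, ⟨z, w⟩, ⟨a, b⟩⟩ ht
    rw [mem_Cls] at hL
    simp only [moves6, Finset.mem_sigma, Finset.mem_product] at ht
    obtain ⟨hxy, ⟨hxz, hyw⟩, hg⟩ := ht
    simp only [pairs, row, Finset.mem_filter, Finset.mem_univ, true_and] at hxy hxz hyw
    obtain ⟨hR, h1, h2, h3, h4⟩ := sw6_spec hL.enc hxy (Or.inl hxz) hyw hg
    have key := label_congr hL.enc.1
    constructor
    · rw [mem_Cls]
      refine hR.isCls hL ?_ ?_
      · rw [← hL.two]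
        congr 1
        ext ⟨i, j⟩
        simp only [pairs, Finset.mem_filter, Finset.mem_univ, true_and, hR.two_iff i j,
          Set.mem_insert_iff, Set.mem_singleton_iff, and_iff_left_iff_imp]
        rintro h (h' | h')
        · have := key _ _ _ _ h'; omega
        · have := key _ _ _ _ h'; omega
      · refine card_remove ?_ hL.enc.1 hxy hL.neg ?_
        · rintro rfl
          rw [hL.enc.2.1] at hxy
          omega
        · intro i j
          rw [hR.neg_iff i j]
          refine and_congr_right fun h => ?_
          simp only [Set.mem_insert_iff, Set.mem_singleton_iff, not_or, ne_eq, and_iff_left_iff_imp]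
          intro _ h'
          have := key _ _ _ _ h'; omega
    · simp only [Finset.mem_product, adjPairs, pairs, Finset.mem_filter, Finset.mem_univ, true_and]
      exact ⟨adj_of_neg hL.cons hxy, h3, h4⟩
  · intro L hL
    rw [mem_Cls] at hL
    have h1 := ones_card hL
    rw [Finset.card_product, Finset.card_product, adjPairs_card hZ, sq]
    have h2 : (pairs L 1).card ≤ N := by omega
    exact Nat.mul_le_mul_left _ (Nat.mul_le_mul h2 h2)

/-- The double count behind the simultaneous removal of adjacent defects `x z` (label `2`) and
`x y` (label `-1`). After the switching `z` is a neighbour of `x`, and `q` one of `z`, along edges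
labelled `1`, which limits the number of preimages. -/
lemma count_joint {d : Fin n → ℕ} (hd : ∀ v, 1 ≤ d v) {Z : SimpleGraph (Fin n)}
    (hZ : Z ∈ Omega d) {G : ℕ}
    (hG : G + 4 + 2 * ((1 + dmax d + 2 * 3) * dmax d + 2 * 3) ≤ M d + 2 * 3) :
    2 * G * ((Cls d Z 1 3).filter fun L => ∃ x y z, L x y = -1 ∧ L x z = 2).card ≤
      M d * (M d + 4) * (dmax d + 2) ^ 2 * (Cls d Z 0 2).card := by
  refine double_count _ _ (moves6 2)
    (fun L => (adjPairs Z ×ˢ pairs L 1).sigma fun e => (row L 1 e.1.1).sigma fun z => row L 1 z)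
    (fun t => sw6 t.1.1 t.1.2 t.2.1.1 t.2.1.2 t.2.2.1 t.2.2.2)
    (fun t => ⟨(t.1, (t.2.1.2, t.2.2.1)), ⟨t.2.1.1, t.2.2.2⟩⟩) ?_ _ _ ?_ ?_ ?_
  · rintro ⟨⟨x, y⟩, ⟨z, w⟩, ⟨p, q⟩⟩ ⟨⟨x', y'⟩, ⟨z', w'⟩, ⟨p', q'⟩⟩ h
    simp only [Sigma.mk.injEq, Prod.mk.injEq, heq_eq_eq] at h
    obtain ⟨⟨⟨rfl, rfl⟩, rfl, rfl⟩, rfl, rfl⟩ := h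
    rfl
  · intro L hL
    rw [Finset.mem_filter, mem_Cls] at hL
    obtain ⟨hL, x, y, z, hxy, hxz⟩ := hL
    rw [moves6, Finset.card_sigma]
    have hmem : (x, y) ∈ pairs L (-1) := by simpa [pairs] using hxy
    refine le_trans ?_ (Finset.single_le_sum
      (f := fun e : Fin n × Fin n =>
        ((row L 2 e.1 ×ˢ row L 1 e.2).sigma fun f => good L f.2 f.1).card)
      (fun _ _ => Nat.zero_le _) hmem)
    rw [hL.enc.1] at hxy
    have h3 := two_le_row_one hd hL hxy
    have h2 : 1 ≤ (row L 2 x).card := Finset.card_pos.2 ⟨z, by simp [row, hxz]⟩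
    rw [Finset.card_sigma]
    have h4 := Finset.card_nsmul_le_sum (row L 2 x ×ˢ row L 1 y)
      (fun f => (good L f.2 f.1).card) G (fun f _ => by
        have := good_card hL f.2 f.1
        omega)
    rw [Finset.card_product, smul_eq_mul] at h4
    refine le_trans (Nat.mul_le_mul_right _ ?_) h4
    exact Nat.mul_le_mul h2 h3
  · rintro L hL ⟨⟨x, y⟩, ⟨z, w⟩, ⟨a, b⟩⟩ ht
    rw [Finset.mem_filter, mem_Cls] at hL
    replace hL := hL.1
    simp only [moves6, Finset.mem_sigma, Finset.mem_product] at ht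
    obtain ⟨hxy, ⟨hxz, hyw⟩, hg⟩ := ht
    simp only [pairs, row, Finset.mem_filter, Finset.mem_univ, true_and] at hxy hxz hyw
    obtain ⟨hR, h1, h2, h3, h4⟩ := sw6_spec hL.enc hxy (Or.inr hxz) hyw hg
    have key := label_congr hL.enc.1
    constructor
    · rw [mem_Cls]
      refine hR.isCls hL ?_ ?_
      · refine card_remove ?_ hL.enc.1 hxz hL.two ?_
        · rintro rfl
          rw [hL.enc.2.1] at hxz
          omega
        · intro i j
          rw [hR.two_iff i j]
          refine and_congr_right fun h => ?_
          simp only [Set.mem_insert_iff, Set.mem_singleton_iff, not_or, ne_eq,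
            and_iff_right_iff_imp]
          intro _ h'
          have := key _ _ _ _ h'; omega
      · refine card_remove ?_ hL.enc.1 hxy hL.neg ?_
        · rintro rfl
          rw [hL.enc.2.1] at hxy
          omega
        · intro i j
          rw [hR.neg_iff i j]
          refine and_congr_right fun h => ?_
          simp only [Set.mem_insert_iff, Set.mem_singleton_iff, not_or, ne_eq, and_iff_left_iff_imp]
          intro _ h'
          have := key _ _ _ _ h'; omega
    · simp only [Finset.mem_product, Finset.mem_sigma, adjPairs, pairs, row, Finset.mem_filter,
        Finset.mem_univ, true_and]
      refine ⟨⟨adj_of_neg hL.cons hxy, h3⟩, ?_, ?_⟩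
      · rw [h2, hxz]; norm_num
      · rw [hR.symm]; exact h4
  · intro L hL
    rw [mem_Cls] at hL
    have h1 := ones_card hL
    have h2 : ∀ x, ((row L 1 x).sigma fun z => row L 1 z).card ≤ (dmax d + 2) ^ 2 := by
      intro x
      rw [Finset.card_sigma, sq]
      refine (Finset.sum_le_card_nsmul _ _ (dmax d + 2) fun z _ => row_one_le hL z).trans ?_
      rw [smul_eq_mul]
      exact Nat.mul_le_mul_right _ (row_one_le hL x)
    rw [Finset.card_sigma]
    refine (Finset.sum_le_card_nsmul _ _ ((dmax d + 2) ^ 2) fun e _ => h2 _).trans ?_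
    rw [smul_eq_mul, Finset.card_product, adjPairs_card hZ]
    refine Nat.mul_le_mul_right _ (Nat.mul_le_mul_left _ ?_)
    omega

/-- The double count behind the removal of a `2`-defect by a four-edge switching, in the absence of
`(-1)`-defects. The result contains the path `p y x q` with labels `1`. -/
lemma count_two {d : Fin n → ℕ} {Z : SimpleGraph (Fin n)} {p G : ℕ}
    (hG : G + 4 * (p + 1) + 2 * ((1 + dmax d) * dmax d) ≤ M d) :
    2 * (p + 1) * G * (Cls d Z (p + 1) 0).card ≤ M d * dmax d ^ 2 * (Cls d Z p 0).card := by
  refine double_count _ _ (fun L => (pairs L 2).sigma fun e => good L e.2 e.1)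
    (fun L => (pairs L 1).sigma fun e => row L 1 e.2 ×ˢ row L 1 e.1)
    (fun t => sw4 t.1.1 t.1.2 t.2.1 t.2.2) id Function.injective_id _ _ ?_ ?_ ?_
  · intro L hL
    rw [mem_Cls] at hL
    rw [Finset.card_sigma]
    have h5 := Finset.card_nsmul_le_sum (pairs L 2) (fun e => (good L e.2 e.1).card) G
      (fun e _ => by
        have := good_card hL e.2 e.1
        simp only [mul_zero, add_zero] at this
        omega)
    rwa [hL.two, smul_eq_mul] at h5
  · rintro L hL ⟨⟨x, y⟩, ⟨a, b⟩⟩ ht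
    rw [mem_Cls] at hL
    simp only [Finset.mem_sigma] at ht
    obtain ⟨hxy, hg⟩ := ht
    simp only [pairs, Finset.mem_filter, Finset.mem_univ, true_and] at hxy
    obtain ⟨hR, h1, h2, h3⟩ := sw4_spec hL.enc hxy hg
    have key := label_congr hL.enc.1
    constructor
    · rw [mem_Cls]
      refine hR.isCls hL ?_ ?_
      · refine card_remove ?_ hL.enc.1 hxy hL.two ?_
        · rintro rfl
          rw [hL.enc.2.1] at hxy
          omega
        · intro i j
          rw [hR.two_iff i j]
          simp only [Set.mem_singleton_iff, ne_eq]
      · rw [← hL.neg]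
        congr 1
        ext ⟨i, j⟩
        simp only [pairs, Finset.mem_filter, Finset.mem_univ, true_and, hR.neg_iff i j,
          Set.mem_singleton_iff, and_iff_left_iff_imp]
        intro h h'
        have := key _ _ _ _ h'; omega
    · simp only [id, Finset.mem_product, Finset.mem_sigma, pairs, row, Finset.mem_filter,
        Finset.mem_univ, true_and]
      refine ⟨h1, h2, ?_⟩
      rw [hR.symm]; exact h3
  · intro L hL
    rw [mem_Cls] at hL
    have h1 := ones_card hL
    rw [Finset.card_sigma]
    refine (Finset.sum_le_card_nsmul _ _ (dmax d ^ 2) fun e _ => ?_).trans ?_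
    · rw [Finset.card_product, sq]
      exact Nat.mul_le_mul (row_one_le hL _) (row_one_le hL _)
    · rw [smul_eq_mul]
      refine Nat.mul_le_mul_right _ ?_
      omega

/-! ### Ratios between consecutive classes -/

lemma cls_neg_le {d : Fin n → ℕ} (hd : ∀ v, 1 ≤ d v) {Z : SimpleGraph (Fin n)} (hZ : Z ∈ Omega d)
    (hD : 3 ≤ dmax d) (hM : 9 * dmax d ^ 2 ≤ M d) {p q : ℕ} (hp : p ≤ 2) (hq : q ≤ 2)
    (hpq : p + q ≤ 3) :
    2 * (Cls d Z p (q + 1)).card ≤ M d ^ 2 * (Cls d Z p q).card := by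
  have h81 : 81 ≤ M d := by nlinarith
  set D := dmax d with hDdef
  obtain ⟨G, hG1, hG2⟩ : ∃ G,
      G + 4 * p + 2 * ((1 + D + 2 * (q + 1)) * D + 2 * (q + 1)) ≤ M d + 2 * (q + 1) ∧
      9 * M d ≤ 32 * (q + 1) * G := by
    refine ⟨M d + 2 * (q + 1) - (4 * p + 2 * ((1 + D + 2 * (q + 1)) * D + 2 * (q + 1))), ?_, ?_⟩
    · have : 4 * p + 2 * ((1 + D + 2 * (q + 1)) * D + 2 * (q + 1)) ≤ M d + 2 * (q + 1) := by
        interval_cases q <;> nlinarith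
      omega
    · generalize hX : 4 * p + 2 * ((1 + D + 2 * (q + 1)) * D + 2 * (q + 1)) = X
      have : 9 * M d + 32 * (q + 1) * X ≤ 32 * (q + 1) * (M d + 2 * (q + 1)) := by
        rw [← hX]
        interval_cases q <;> nlinarith
      rw [Nat.mul_sub]
      omega
  have h1 := count_neg hd hZ hG1 (N := M d + 4) (by omega)
  have h2 : 8 * (M d + 4) ^ 2 ≤ 9 * M d ^ 2 := by nlinarith
  generalize (Cls d Z p (q + 1)).card = X at *
  generalize (Cls d Z p q).card = Y at *
  have h3 : 36 * M d * (2 * X) ≤ 36 * M d * (M d ^ 2 * Y) := by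
    calc 36 * M d * (2 * X) = 8 * (9 * M d * X) := by ring
      _ ≤ 8 * (32 * (q + 1) * G * X) := by gcongr
      _ = 32 * (8 * (q + 1) * G * X) := by ring
      _ ≤ 32 * (M d * (M d + 4) ^ 2 * Y) := by gcongr
      _ = 4 * M d * Y * (8 * (M d + 4) ^ 2) := by ring
      _ ≤ 4 * M d * Y * (9 * M d ^ 2) := by gcongr
      _ = _ := by ring
  exact Nat.le_of_mul_le_mul_left h3 (by omega)

lemma cls_two_le {d : Fin n → ℕ} {Z : SimpleGraph (Fin n)}
    (hD : 3 ≤ dmax d) (hM : 9 * dmax d ^ 2 ≤ M d) {p : ℕ} (hp : p ≤ 1) :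
    2 * (Cls d Z (p + 1) 0).card ≤ M d * (Cls d Z p 0).card := by
  have h81 : 81 ≤ M d := by nlinarith
  set D := dmax d with hDdef
  obtain ⟨G, hG1, hG2⟩ : ∃ G, G + 4 * (p + 1) + 2 * ((1 + D) * D) ≤ M d ∧
      M d ≤ 9 * (p + 1) * G := by
    refine ⟨M d - (4 * (p + 1) + 2 * ((1 + D) * D)), ?_, ?_⟩
    · have : 4 * (p + 1) + 2 * ((1 + D) * D) ≤ M d := by nlinarith
      omega
    · generalize hX : 4 * (p + 1) + 2 * ((1 + D) * D) = X
      have : M d + 9 * (p + 1) * X ≤ 9 * (p + 1) * M d := by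
        rw [← hX]
        interval_cases p <;> nlinarith
      rw [Nat.mul_sub]
      omega
  have h1 := count_two (Z := Z) hG1
  generalize (Cls d Z (p + 1) 0).card = X at *
  generalize (Cls d Z p 0).card = Y at *
  have h3 : M d * (2 * X) ≤ M d * (M d * Y) := by
    calc M d * (2 * X) = 2 * (M d * X) := by ring
      _ ≤ 2 * (9 * (p + 1) * G * X) := by gcongr
      _ = 9 * (2 * (p + 1) * G * X) := by ring
      _ ≤ 9 * (M d * D ^ 2 * Y) := by gcongr
      _ = M d * Y * (9 * D ^ 2) := by ring
      _ ≤ M d * Y * M d := by gcongr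
      _ = _ := by ring
  exact Nat.le_of_mul_le_mul_left h3 (by omega)

lemma cls_joint_le {d : Fin n → ℕ} (hd : ∀ v, 1 ≤ d v) {Z : SimpleGraph (Fin n)}
    (hZ : Z ∈ Omega d) (hD : 3 ≤ dmax d) (hM : 9 * dmax d ^ 2 ≤ M d) :
    ((Cls d Z 1 3).filter fun L => ∃ x y z, L x y = -1 ∧ L x z = 2).card ≤
      2 * M d ^ 2 * (Cls d Z 0 2).card := by
  have h81 : 81 ≤ M d := by nlinarith
  set D := dmax d with hDdef
  obtain ⟨G, hG1, hG2⟩ : ∃ G, G + 4 + 2 * ((1 + D + 2 * 3) * D + 2 * 3) ≤ M d + 2 * 3 ∧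
      M d ≤ 9 * G := by
    refine ⟨M d + 2 * 3 - (4 + 2 * ((1 + D + 2 * 3) * D + 2 * 3)), ?_, ?_⟩
    · have : 4 + 2 * ((1 + D + 2 * 3) * D + 2 * 3) ≤ M d + 2 * 3 := by nlinarith
      omega
    · have : M d + 9 * (4 + 2 * ((1 + D + 2 * 3) * D + 2 * 3)) ≤ 9 * (M d + 2 * 3) := by
        nlinarith
      omega
  have h1 := count_joint hd hZ hG1
  generalize ((Cls d Z 1 3).filter fun L => ∃ x y z, L x y = -1 ∧ L x z = 2).card = X at *
  generalize (Cls d Z 0 2).card = Y at *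
  have h2 : 81 * (D + 2) ^ 2 ≤ 25 * M d := by nlinarith
  have h2' : 81 * (M d + 4) ≤ 85 * M d := by omega
  have h3 : 6561 * (2 * M d) * X ≤ 6561 * (2 * M d) * (2 * M d ^ 2 * Y) := by
    calc 6561 * (2 * M d) * X = 6561 * (2 * (M d) * X) := by ring
      _ ≤ 6561 * (2 * (9 * G) * X) := by gcongr
      _ = 6561 * 9 * (2 * G * X) := by ring
      _ ≤ 6561 * 9 * (M d * (M d + 4) * (D + 2) ^ 2 * Y) := by gcongr
      _ = 9 * M d * (81 * (M d + 4)) * (81 * (D + 2) ^ 2) * Y := by ring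
      _ ≤ 9 * M d * (85 * M d) * (25 * M d) * Y := by gcongr
      _ = 19125 * (M d ^ 3 * Y) := by ring
      _ ≤ 26244 * (M d ^ 3 * Y) := by gcongr; norm_num
      _ = _ := by ring
  exact Nat.le_of_mul_le_mul_left h3 (by omega)

/-! ### Defect-free encodings and the classification of good encodings -/

/-- An encoding without defects is the adjacency matrix of a graph in `Omega d`. -/
lemma cls_zero_le (d : Fin n → ℕ) (Z : SimpleGraph (Fin n)) :
    (Cls d Z 0 0).card ≤ (Omega d).ncard := by
  rw [← Set.ncard_coe_finset]
  have h01 : ∀ L ∈ Cls d Z 0 0, ∀ i j, L i j = 0 ∨ L i j = 1 := by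
    intro L hL i j
    rw [mem_Cls] at hL
    have h2 := Finset.card_eq_zero.1 hL.two
    have h3 := Finset.card_eq_zero.1 hL.neg
    have h4 : (i, j) ∉ pairs L 2 := by simp [h2]
    have h5 : (i, j) ∉ pairs L (-1) := by simp [h3]
    simp only [pairs, Finset.mem_filter, Finset.mem_univ, true_and] at h4 h5
    have := hL.enc.2.2.1 i j
    tauto
  refine Set.ncard_le_ncard_of_injOn
    (fun L => SimpleGraph.fromRel fun i j => L i j = 1) ?_ ?_ (Set.toFinite _)
  · intro L hL
    have h := h01 L hL
    rw [Finset.mem_coe, mem_Cls] at hL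
    intro v
    have h1 := row_sum hL.enc v
    have h2 : (row L 2 v) = ∅ := by
      ext j
      rcases h v j with h | h <;> simp [row, h]
    have h3 : (row L (-1) v) = ∅ := by
      ext j
      rcases h v j with h | h <;> simp [row, h]
    rw [h2, h3] at h1
    simp only [Finset.card_empty, mul_zero, add_zero] at h1
    rw [← h1, ← Set.ncard_coe_finset]
    congr 1
    ext j
    simp only [SimpleGraph.fromRel_adj, Set.mem_ofPred_eq, row, Finset.coe_filter, Finset.mem_univ,
      true_and, hL.enc.1 j v, or_self, and_iff_right_iff_imp]
    rintro hj rfl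
    rw [hL.enc.2.1] at hj
    norm_num at hj
  · intro L hL L' hL' hLL
    have h := h01 L hL
    have h' := h01 L' hL'
    rw [Finset.mem_coe, mem_Cls] at hL hL'
    ext i j
    have h1 : (SimpleGraph.fromRel fun i j => L i j = 1).Adj i j ↔
        (SimpleGraph.fromRel fun i j => L' i j = 1).Adj i j := by
      rw [show (SimpleGraph.fromRel fun i j => L i j = 1) =
        SimpleGraph.fromRel fun i j => L' i j = 1 from hLL]
    simp only [SimpleGraph.fromRel_adj, hL.enc.1 j i, hL'.enc.1 j i, or_self] at h1
    by_cases hij : i = j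
    · subst hij
      rw [hL.enc.2.1, hL'.enc.2.1]
    · have := h i j
      have := h' i j
      grind

lemma even_pairs {L : Matrix (Fin n) (Fin n) ℤ} (hs : ∀ i j, L i j = L j i)
    (h0 : ∀ i, L i i = 0) {c : ℤ} (hc : c ≠ 0) : Even (pairs L c).card := by
  have h : ∑ _e ∈ pairs L c, (1 : ZMod 2) = 0 := by
    refine Finset.sum_involution (fun e _ => e.swap) ?_ ?_ ?_ ?_
    · intro e _; rfl
    · rintro ⟨i, j⟩ he _ h
      simp only [Prod.swap_prod_mk, Prod.mk.injEq] at h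
      obtain ⟨rfl, -⟩ := h
      simp only [pairs, Finset.mem_filter, Finset.mem_univ, true_and, h0] at he
      exact hc he.symm
    · rintro ⟨i, j⟩ he
      simpa [pairs, hs j i] using he
    · intro e _; simp
  rw [Finset.sum_const, nsmul_eq_mul, mul_one] at h
  exact (ZMod.natCast_eq_zero_iff_even).1 h

/-- The five configurations share one shape: a vertex `b` with a `2`-edge to `r` and `(-1)`-edges
to `s` and `t`, and a fourth edge `e f` avoiding `b`. -/
lemma valid_shape {d : Fin n → ℕ} {L : Matrix (Fin n) (Fin n) ℤ} (h : ValidEncoding d L) :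
    ∃ (b r s t e f : Fin n) (ℓ : ℤ), (ℓ = -1 ∨ ℓ = 2) ∧ b ≠ r ∧ r ≠ s ∧ r ≠ t ∧ e ≠ b ∧ f ≠ b ∧
      DefectsWithin L {(s(b, r), 2), (s(b, s), -1), (s(b, t), -1), (s(e, f), ℓ)} := by
  obtain ⟨-, -, a, b, c, u, e, f, ℓ, hℓ, h⟩ := h
  rcases h with ⟨hd, -, he, hf, hD⟩ | ⟨hd, hD⟩ | ⟨hd, hD⟩ | ⟨hd, hD⟩ | ⟨hd, hD⟩
  · simp only [Set.mem_insert_iff, Set.mem_singleton_iff, not_or] at he hf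
    simp only [List.pairwise_cons, List.mem_cons] at hd
    refine ⟨b, a, c, u, e, f, ℓ, hℓ, by grind, by grind, by grind, by grind, by grind, ?_⟩
    rwa [Sym2.eq_swap (a := b) (b := a)]
  · simp only [List.pairwise_cons, List.mem_cons] at hd
    refine ⟨b, a, c, u, u, e, ℓ, hℓ, by grind, by grind, by grind, by grind, by grind, ?_⟩
    rwa [Sym2.eq_swap (a := b) (b := a)]
  · simp only [List.pairwise_cons, List.mem_cons] at hd
    refine ⟨b, u, a, c, u, e, ℓ, hℓ, by grind, by grind, by grind, by grind, by grind, ?_⟩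
    intro x y hxy hL
    have := hD x y hxy hL
    rw [Sym2.eq_swap (a := b) (b := a)]
    simp only [Set.mem_insert_iff, Set.mem_singleton_iff] at this ⊢
    tauto
  · simp only [List.pairwise_cons, List.mem_cons] at hd
    refine ⟨b, u, a, c, u, c, ℓ, hℓ, by grind, by grind, by grind, by grind, by grind, ?_⟩
    intro x y hxy hL
    have := hD x y hxy hL
    rw [Sym2.eq_swap (a := b) (b := a)]
    simp only [Set.mem_insert_iff, Set.mem_singleton_iff] at this ⊢
    tauto
  · simp only [List.pairwise_cons, List.mem_cons] at hd
    refine ⟨b, a, c, u, u, c, ℓ, hℓ, by grind, by grind, by grind, by grind, by grind, ?_⟩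
    rwa [Sym2.eq_swap (a := b) (b := a)]

/-- Every good consistent encoding lies in one of the classes; with one `2`-defect and three
`(-1)`-defects it contains adjacent defects with different labels. -/
lemma Lstar_classify {d : Fin n → ℕ} {Z : SimpleGraph (Fin n)} {L : Matrix (Fin n) (Fin n) ℤ}
    (hL : L ∈ Lstar d Z) :
    (∃ p q, p ≤ 2 ∧ q ≤ 2 ∧ IsCls d Z p q L) ∨ IsCls d Z 0 3 L ∨
      (IsCls d Z 1 3 L ∧ ∃ x y z, L x y = -1 ∧ L x z = 2) := by
  obtain ⟨⟨hV, -, -, hg⟩, hcons⟩ := hL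
  have henc := hV.1
  obtain ⟨hs, h0, -, -⟩ := hV.1
  obtain ⟨b, r, s, t, e, f, ℓ, hℓ, hbr, hrs, hrt, heb, hfb, hD⟩ := valid_shape hV
  have hne : ∀ x y, L x y ≠ 0 → x ≠ y := by
    rintro x y h rfl
    exact h (h0 x)
  have h2 : ∀ x y, L x y = 2 → (x = b ∧ y = r ∨ x = r ∧ y = b) ∨
      ℓ = 2 ∧ (x = e ∧ y = f ∨ x = f ∧ y = e) := by
    intro x y h
    have := hD x y (hne x y (by omega)) (Or.inl h)
    rw [h] at this
    simp only [Set.mem_insert_iff, Set.mem_singleton_iff, Prod.mk.injEq, Sym2.eq_iff] at this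
    have e1 : ¬ ((2 : ℤ) = -1) := by norm_num
    simp only [e1, and_false, false_or, and_true] at this
    rcases this with h | h
    · exact Or.inl h
    · exact Or.inr ⟨h.2.symm, h.1⟩
  have hn : ∀ x y, L x y = -1 → (x = b ∧ y = s ∨ x = s ∧ y = b) ∨ (x = b ∧ y = t ∨ x = t ∧ y = b) ∨
      ℓ = -1 ∧ (x = e ∧ y = f ∨ x = f ∧ y = e) := by
    intro x y h
    have := hD x y (hne x y (by omega)) (Or.inr h)
    rw [h] at this
    simp only [Set.mem_insert_iff, Set.mem_singleton_iff, Prod.mk.injEq, Sym2.eq_iff] at this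
    have e1 : ¬ ((-1 : ℤ) = 2) := by norm_num
    simp only [e1, and_false, false_or, and_true] at this
    rcases this with h | h | h
    · exact Or.inl h
    · exact Or.inr (Or.inl h)
    · exact Or.inr (Or.inr ⟨h.2.symm, h.1⟩)
  have hloc : DefectLocal d L := by
    intro x x' y z h1 h1' h3
    refine ⟨?_, ?_⟩
    · have a1 := h2 y x h1
      have a2 := h2 y x' h1'
      have a3 := hn y z h3
      rcases hℓ with rfl | rfl
      · clear a3; norm_num at a1 a2; grind
      · norm_num at a1 a2 a3; grind
    · refine hg x y z (hne _ _ (by omega)).symm (hne _ _ (by omega)) ?_ (by rwa [hs]) h3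
      rintro rfl
      omega
  obtain ⟨p, hp⟩ := even_pairs hs h0 (c := 2) (by norm_num)
  obtain ⟨q, hq⟩ := even_pairs hs h0 (c := -1) (by norm_num)
  rw [← two_mul] at hp hq
  have hC : IsCls d Z p q L := ⟨henc, hcons, hloc, hp, hq⟩
  rcases hℓ with rfl | rfl
  · have c2 : pairs L 2 ⊆ {(b, r), (r, b)} := by
      rintro ⟨x, y⟩ h
      simp only [pairs, Finset.mem_filter, Finset.mem_univ, true_and] at h
      have := h2 x y h
      norm_num at this
      simpa using this
    have cn : pairs L (-1) ⊆ {(b, s), (s, b), (b, t), (t, b), (e, f), (f, e)} := by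
      rintro ⟨x, y⟩ h
      simp only [pairs, Finset.mem_filter, Finset.mem_univ, true_and] at h
      have := hn x y h
      simp only [Finset.mem_insert, Finset.mem_singleton, Prod.mk.injEq]
      tauto
    have l2 := (Finset.card_le_card c2).trans Finset.card_le_two
    have ln := (Finset.card_le_card cn).trans Finset.card_le_six
    have hp1 : p ≤ 1 := by omega
    have hq3 : q ≤ 3 := by omega
    by_cases hq2 : q ≤ 2
    · exact Or.inl ⟨p, q, by omega, hq2, hC⟩
    obtain rfl : q = 3 := by omega
    right
    interval_cases p
    · exact Or.inl hC
    right
    refine ⟨hC, b, s, r, ?_, ?_⟩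
    · by_contra hbs
      have cn' : pairs L (-1) ⊆ {(b, t), (t, b), (e, f), (f, e)} := by
        rintro ⟨x, y⟩ h
        have h' := cn h
        simp only [pairs, Finset.mem_filter, Finset.mem_univ, true_and] at h
        have := hs s b
        simp only [Finset.mem_insert, Finset.mem_singleton, Prod.mk.injEq] at h' ⊢
        grind
      have := (Finset.card_le_card cn').trans Finset.card_le_four
      omega
    · by_contra hbr
      have : pairs L 2 = ∅ := by
        rw [Finset.eq_empty_iff_forall_notMem]
        rintro ⟨x, y⟩ h
        have h' := c2 h
        simp only [pairs, Finset.mem_filter, Finset.mem_univ, true_and] at h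
        have := hs r b
        simp only [Finset.mem_insert, Finset.mem_singleton, Prod.mk.injEq] at h'
        grind
      rw [this] at hp
      simp at hp
  · left
    have c2 : pairs L 2 ⊆ {(b, r), (r, b), (e, f), (f, e)} := by
      rintro ⟨x, y⟩ h
      simp only [pairs, Finset.mem_filter, Finset.mem_univ, true_and] at h
      have := h2 x y h
      simp only [Finset.mem_insert, Finset.mem_singleton, Prod.mk.injEq]
      tauto
    have cn : pairs L (-1) ⊆ {(b, s), (s, b), (b, t), (t, b)} := by
      rintro ⟨x, y⟩ h
      simp only [pairs, Finset.mem_filter, Finset.mem_univ, true_and] at h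
      have := hn x y h
      norm_num at this
      simp only [Finset.mem_insert, Finset.mem_singleton, Prod.mk.injEq]
      tauto
    have l2 := (Finset.card_le_card c2).trans Finset.card_le_four
    have ln := (Finset.card_le_card cn).trans Finset.card_le_four
    exact ⟨p, q, by omega, by omega, hC⟩

/-! ### Summation over the classes -/

lemma ratio_chain {m S x y c j k : ℕ} (h : 2 * y ≤ m ^ j * x) (hx : c * x ≤ m ^ k * S) :
    c * 2 * y ≤ m ^ (j + k) * S := by
  calc c * 2 * y = c * (2 * y) := by ring
    _ ≤ c * (m ^ j * x) := by gcongr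
    _ = m ^ j * (c * x) := by ring
    _ ≤ m ^ j * (m ^ k * S) := by gcongr
    _ = _ := by ring

/-- The critical lemma: `|L*(Z)| ≤ 2 M⁶ |Ω(d)|`. -/
theorem Lstar_card_le
    (d : Fin n → ℕ) (hgraphical : (Omega d).Nonempty)
    (hdmin : ∀ v, 1 ≤ d v)
    (hdmax3 : 3 ≤ dmax d)
    (hdmaxM : (dmax d : ℝ) ≤ (1 / 3) * Real.sqrt (M d))
    (Z : SimpleGraph (Fin n)) (hZ : Z ∈ Omega d) :
    (Lstar d Z).ncard ≤ 2 * M d ^ 6 * (Omega d).ncard := by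
  have hM : 9 * dmax d ^ 2 ≤ M d := by
    have h1 : (3 * dmax d : ℝ) ≤ Real.sqrt (M d) := by linarith
    have h2 := (Real.le_sqrt' (by
      have : (3 : ℝ) ≤ dmax d := by exact_mod_cast hdmax3
      linarith)).1 h1
    have h3 : (9 * dmax d ^ 2 : ℝ) ≤ M d := by linarith
    exact_mod_cast h3
  have h81 : 81 ≤ M d := by nlinarith
  set X := (Cls d Z 1 3).filter fun L => ∃ x y z, L x y = -1 ∧ L x z = 2 with hX
  set U := ((Finset.range 3 ×ˢ Finset.range 3).biUnion fun e => Cls d Z e.1 e.2) ∪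
    (Cls d Z 0 3 ∪ X) with hU
  have hsub : Lstar d Z ⊆ U := by
    intro L hL
    rw [hU, Finset.mem_coe, Finset.mem_union, Finset.mem_union, Finset.mem_biUnion, hX,
      Finset.mem_filter, mem_Cls, mem_Cls]
    rcases Lstar_classify hL with ⟨p, q, hp, hq, h⟩ | h | h
    · refine Or.inl ⟨(p, q), ?_, mem_Cls.2 h⟩
      simp only [Finset.mem_product, Finset.mem_range]
      omega
    · exact Or.inr (Or.inl h)
    · exact Or.inr (Or.inr h)
  have hcard : (Lstar d Z).ncard ≤ ∑ e ∈ Finset.range 3 ×ˢ Finset.range 3, (Cls d Z e.1 e.2).card +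
      ((Cls d Z 0 3).card + X.card) := by
    refine (Set.ncard_le_ncard hsub (Finset.finite_toSet _)).trans ?_
    rw [Set.ncard_coe_finset]
    exact (Finset.card_union_le _ _).trans
      (add_le_add Finset.card_biUnion_le (Finset.card_union_le _ _))
  rw [Finset.sum_product] at hcard
  simp only [Finset.sum_range_succ, Finset.sum_range_zero, zero_add] at hcard
  have neg := fun p q hp hq hpq =>
    cls_neg_le hdmin hZ hdmax3 hM (p := p) (q := q) hp hq hpq
  have c00 := cls_zero_le d Z
  have c01 := neg 0 0 (by omega) (by omega) (by omega)
  have c02 := neg 0 1 (by omega) (by omega) (by omega)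
  have c03 := neg 0 2 (by omega) (by omega) (by omega)
  have c11 := neg 1 0 (by omega) (by omega) (by omega)
  have c12 := neg 1 1 (by omega) (by omega) (by omega)
  have c21 := neg 2 0 (by omega) (by omega) (by omega)
  have c22 := neg 2 1 (by omega) (by omega) (by omega)
  have c10 := cls_two_le (Z := Z) hdmax3 hM (p := 0) (by omega)
  have c20 := cls_two_le (Z := Z) hdmax3 hM (p := 1) (by omega)
  have c13 : X.card ≤ _ := cls_joint_le hdmin hZ hdmax3 hM
  simp only [zero_add, Nat.reduceAdd] at c01 c02 c03 c11 c12 c21 c22 c10 c20 c13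
  generalize (Omega d).ncard = S at *
  generalize M d = m at *
  have b01 := ratio_chain (c := 1) (k := 0) (S := S) c01 (by simpa using c00)
  have b02 := ratio_chain c02 b01
  have b03 := ratio_chain c03 b02
  have b10 := ratio_chain (m := m) (c := 1) (j := 1) (k := 0) (S := S) (by simpa using c10)
    (by simpa using c00)
  have b11 := ratio_chain c11 b10
  have b12 := ratio_chain c12 b11
  have b20 := ratio_chain (j := 1) (by simpa using c20) b10
  have b21 := ratio_chain c21 b20
  have b22 := ratio_chain c22 b21
  have b13 := ratio_chain (m := m) (k := 4) (S := S) (j := 2) (c := 1) (y := X.card)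
    (x := 4 * (Cls d Z 0 2).card) (by linarith) (by simpa using b02)
  norm_num at b01 b02 b03 b10 b11 b12 b20 b21 b22 b13
  have pw : ∀ k, 81 * (m ^ k * S) ≤ m ^ (k + 1) * S := by
    intro k
    calc 81 * (m ^ k * S) ≤ m * (m ^ k * S) := by gcongr
      _ = _ := by ring
  have p0 := pw 0
  have p1 := pw 1
  have p2 := pw 2
  have p3 := pw 3
  have p4 := pw 4
  have p5 := pw 5
  simp only [zero_add, pow_zero, pow_one, one_mul, Nat.reduceAdd] at p0 p1 p2 p3 p4 p5
  rw [mul_assoc]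
  omega

end SwitchChain
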